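/- arXiv:0902.1661 — 5 statements merged into one kernel-verified Lean document; each statement's English description precedes it below -/
import Mathlib

section
/- Let π be a b-ordering of G and let D be a rooted spanning tree of G with root u0 and parent map p. Then there exists a function f : V → ℤ such that: π(v) ∈ Θ_{(f(v), f(v)+2)} for every inner vertex v of D; π(v) ∈ Θ_{(f(v), f(v)+4)} for every leaf v of D; |f(v) − f(p(v))| = 1 for every inner vertex v ≠ u0; and f(v) = f(p(v)) − 1 for every leaf v. -/
/-!
Cut the positions into consecutive blocks of length `b + 1` and let `s v` be the index of the block
containing `π v`. Adjacent vertices lie at distance at most `b`, so their block indices differ by at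
most one (`block_le`). For an inner vertex `v`, both `s v - 1` and `s v` are admissible as `f v`,
since `Θ_{(f v, f v + 2)}` covers two blocks; choose the one with the same parity as the depth of
`v` in the tree. The indices chosen at an inner vertex and at its parent then differ by at most two
and have opposite parities, hence differ by exactly one. A leaf `v` is given `f (pa v) - 1`, and its
position is within one block of `Θ_{(f (pa v), f (pa v) + 2)}`. The root is not a leaf because there
are at least two vertices (`not_isLeaf_root`).
-/

/-- The segment `Θ_{(i,j)} = {i(b+1)+1, i(b+1)+2, …, j(b+1)} ∩ {1,…,n}`. -/
def Seg (b n : ℕ) (i j : ℤ) : Set ℕ :=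
  {p : ℕ | i * (b + 1) < (p : ℤ) ∧ (p : ℤ) ≤ j * (b + 1) ∧ 1 ≤ p ∧ p ≤ n}

/-- A rooted spanning tree of `G` with root `u0` and parent map `pa`. -/
def IsRootedSpanningTree {V : Type*} (G : SimpleGraph V) (u0 : V) (pa : V → V) : Prop :=
  pa u0 = u0 ∧ (∀ v, v ≠ u0 → G.Adj v (pa v)) ∧ ∀ v, ∃ m : ℕ, pa^[m] v = u0

/-- A vertex is a leaf of the rooted tree with parent map `pa` if it is not the
parent of any vertex other than itself. -/
def IsLeaf {V : Type*} (pa : V → V) (v : V) : Prop := ∀ w, pa w = v → w = v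

/-- The index `s` of the block `{s(b+1)+1, …, (s+1)(b+1)}` containing the position `p`. -/
def block (b p : ℕ) : ℤ := ((p : ℤ) - 1) / (b + 1)

lemma block_lt (b p : ℕ) : block b p * (b + 1) < p := by
  have h := Int.ediv_mul_le ((p : ℤ) - 1) (b := (b : ℤ) + 1) (by omega)
  unfold block
  omega

lemma le_block (b p : ℕ) : (p : ℤ) ≤ (block b p + 1) * (b + 1) := by
  have h := Int.lt_ediv_add_one_mul_self ((p : ℤ) - 1) (b := (b : ℤ) + 1) (by omega)
  unfold block
  omega

lemma block_le {b p q : ℕ} (h : (p : ℤ) - q ≤ b) : block b p ≤ block b q + 1 := by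
  have h1 := block_lt b p
  have h2 := le_block b q
  by_contra! hc
  have hc' : block b q + 2 ≤ block b p := by omega
  have h3 := mul_le_mul_of_nonneg_right hc' (show (0 : ℤ) ≤ (b : ℤ) + 1 by omega)
  linarith

lemma mem_Seg_of_block {b n p : ℕ} {i j : ℤ} (hp : p ∈ Set.Icc 1 n)
    (hi : i ≤ block b p) (hj : block b p + 1 ≤ j) : p ∈ Seg b n i j := by
  have h0 : (0 : ℤ) ≤ (b : ℤ) + 1 := by omega
  exact ⟨(mul_le_mul_of_nonneg_right hi h0).trans_lt (block_lt b p),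
    (le_block b p).trans (mul_le_mul_of_nonneg_right hj h0), hp.1, hp.2⟩

lemma not_isLeaf_root {V : Type*} [Nontrivial V] {G : SimpleGraph V} {u0 : V} {pa : V → V}
    (h : IsRootedSpanningTree G u0 pa) : ¬ IsLeaf pa u0 := by
  intro hl
  have key : ∀ m : ℕ, ∀ v, pa^[m] v = u0 → v = u0 := by
    intro m
    induction m with
    | zero => exact fun v hv => hv
    | succ m ih => exact fun v hv => hl v (ih (pa v) hv)
  obtain ⟨v, hv⟩ := exists_ne u0
  obtain ⟨m, hm⟩ := h.2.2 v
  exact hv (key m v hm)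

/-- Only the parity of the depth matters later; the depth is the least number of parent steps
leading to the root. -/
lemma exists_depth {V : Type*} {G : SimpleGraph V} {u0 : V} {pa : V → V}
    (h : IsRootedSpanningTree G u0 pa) :
    ∃ d : V → ℕ, ∀ v, v ≠ u0 → d v = d (pa v) + 1 := by
  classical
  refine ⟨fun v => Nat.find (h.2.2 v), fun v hv => ?_⟩
  exact Nat.find_comp_succ (h.2.2 v) (h.2.2 (pa v)) hv

/-- for a `b`-ordering `π` and a rooted spanning tree `D` there is a
function `f : V → ℤ` recording a consistent segment assignment: inner vertices get
segments `Θ_{(f v, f v + 2)}`, leaves get `Θ_{(f v, f v + 4)}`, the index of an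
inner non-root vertex differs from that of its parent by exactly one, and the index
of a leaf is one less than that of its parent. -/
theorem stmt1 {V : Type*} [Fintype V] (G : SimpleGraph V) (b n : ℕ)
    (hb : 1 ≤ b) (hn : 2 ≤ n) (hcard : Fintype.card V = n)
    (π : V → ℕ) (hbij : Set.BijOn π Set.univ (Set.Icc 1 n))
    (hband : ∀ u v, G.Adj u v → |(π u : ℤ) - (π v : ℤ)| ≤ b)
    (u0 : V) (pa : V → V) (htree : IsRootedSpanningTree G u0 pa) :
    ∃ f : V → ℤ,
      (∀ v, ¬ IsLeaf pa v → π v ∈ Seg b n (f v) (f v + 2)) ∧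
      (∀ v, IsLeaf pa v → π v ∈ Seg b n (f v) (f v + 4)) ∧
      (∀ v, ¬ IsLeaf pa v → v ≠ u0 → |f v - f (pa v)| = 1) ∧
      (∀ v, IsLeaf pa v → f v = f (pa v) - 1) := by
  classical
  have : Nontrivial V := Fintype.one_lt_card_iff_nontrivial.mp (by omega)
  have hroot := not_isLeaf_root htree
  obtain ⟨d, hd⟩ := exists_depth htree
  have hπ : ∀ v, π v ∈ Set.Icc 1 n := fun v => hbij.mapsTo (Set.mem_univ v)
  have hpa : ∀ v, v ≠ u0 → ¬ IsLeaf pa (pa v) := fun v hv hl =>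
    (htree.2.1 v hv).ne (hl v rfl)
  have hs : ∀ v, v ≠ u0 → block b (π v) ≤ block b (π (pa v)) + 1 ∧
      block b (π (pa v)) ≤ block b (π v) + 1 := by
    intro v hv
    have h := abs_le.mp (hband _ _ (htree.2.1 v hv))
    exact ⟨block_le h.2, block_le (by linarith [h.1])⟩
  -- `g v` is the element of `{s v - 1, s v}` congruent to the depth of `v` modulo 2.
  obtain ⟨g, hg⟩ : ∃ g : V → ℤ, ∀ v, g v ≤ block b (π v) ∧ block b (π v) ≤ g v + 1 ∧
      g v % 2 = (d v : ℤ) % 2 :=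
    ⟨fun v => block b (π v) - (block b (π v) - d v) % 2, fun v => by dsimp only; omega⟩
  refine ⟨fun v => if IsLeaf pa v then g (pa v) - 1 else g v, ?_, ?_, ?_, ?_⟩
  · intro v hv
    have := hg v
    simp only [if_neg hv]
    exact mem_Seg_of_block (hπ v) (by omega) (by omega)
  · intro v hv
    have hne : v ≠ u0 := fun h => hroot (h ▸ hv)
    have := hg (pa v)
    have := hs v hne
    simp only [if_pos hv]
    exact mem_Seg_of_block (hπ v) (by omega) (by omega)
  · intro v hv hne
    have := hg v
    have := hg (pa v)
    have := hs v hne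
    have := hd v hne
    simp only [if_neg hv, if_neg (hpa v hne)]
    rw [abs_eq zero_le_one]
    omega
  · intro v hv
    have hne : v ≠ u0 := fun h => hroot (h ▸ hv)
    simp only [if_pos hv, if_neg (hpa v hne)]
end

section
/- An ordering π of G is a b-ordering if and only if the following two conditions hold for every edge uv of G: (1) |segment(π(u)) − segment(π(v))| ≤ 1; and (2) if segment(π(u)) + 1 = segment(π(v)), then the pair (color(π(u)), segment(π(u))) is lexicographically greater than the pair (color(π(v)), segment(π(v))), i.e., π(u) comes later than π(v) in the color order. -/
/-!
Division with remainder writes a position `i ≥ 1` as `i = (b+1) * s + c + 1` with `c ≤ b`, where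
`s + 1` is its segment and `c + 1` its color (`exists_segm_color`). So for positions `i`, `j` with
data `(s, c)`, `(t, d)`, the difference `j - i` equals `(b+1) * (t-s) + (d-c)` with `|d-c| ≤ b`.
If `t = s`, then `|j - i| ≤ b` always; if `|t - s| ≥ 2`, never; and if `t = s + 1`, then
`|j - i| ≤ b` means exactly `d < c`. This is `abs_sub_le_iff_segm_color`, which is applied to each
edge in both orientations. The tie case of the lexicographic order cannot occur, since there the
segment of `j` is larger.
-/

/-- `segm b i = ⌈i/(b+1)⌉`, the base-segment number of position `i`. -/
def segm (b i : ℕ) : ℕ := (i + b) / (b + 1)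

/-- `color b i = ((i-1) mod (b+1)) + 1`, the color of position `i`. -/
def color (b i : ℕ) : ℕ := (i - 1) % (b + 1) + 1

theorem exists_segm_color (b i : ℕ) (hi : 1 ≤ i) :
    ∃ s c, c ≤ b ∧ i = (b + 1) * s + c + 1 ∧ segm b i = s + 1 ∧ color b i = c + 1 := by
  refine ⟨(i - 1) / (b + 1), (i - 1) % (b + 1), ?_, ?_, ?_, rfl⟩
  · have := Nat.mod_lt (i - 1) (show b + 1 > 0 by omega)
    omega
  · have := Nat.div_add_mod (i - 1) (b + 1)
    omega
  · have h : i + b = (i - 1) + (b + 1) := by omega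
    rw [segm, h, Nat.add_div_right _ (Nat.succ_pos b)]

/-- The characterization for a single pair of positions. Condition (2) is not symmetric in the
two positions, so both orientations appear. -/
theorem abs_sub_le_iff_segm_color (b i j : ℕ) (hi : 1 ≤ i) (hj : 1 ≤ j) :
    |(i : ℤ) - (j : ℤ)| ≤ b ↔
      |(segm b i : ℤ) - (segm b j : ℤ)| ≤ 1 ∧
        (segm b i + 1 = segm b j → color b j < color b i) ∧
        (segm b j + 1 = segm b i → color b i < color b j) := by
  obtain ⟨s, c, hc, hi', hs, hci⟩ := exists_segm_color b i hi
  obtain ⟨t, d, hd, hj', ht, hdj⟩ := exists_segm_color b j hj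
  rw [hs, ht, hci, hdj, abs_le, abs_le]
  -- In each case the products `(b + 1) * s` and `(b + 1) * t` satisfy a linear relation, after
  -- which they can be replaced by variables and the claim is linear arithmetic.
  rcases lt_trichotomy s t with h | h | h
  · rcases Nat.lt_or_ge (s + 1) t with h2 | h2
    · have h3 : (b + 1) * (s + 2) ≤ (b + 1) * t := Nat.mul_le_mul_left _ h2
      rw [Nat.mul_add] at h3
      generalize (b + 1) * s = p at *
      generalize (b + 1) * t = q at *
      omega
    · obtain rfl : t = s + 1 := by omega
      rw [Nat.mul_add] at hj'
      generalize (b + 1) * s = p at *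
      omega
  · subst h
    generalize (b + 1) * s = p at *
    omega
  · rcases Nat.lt_or_ge (t + 1) s with h2 | h2
    · have h3 : (b + 1) * (t + 2) ≤ (b + 1) * s := Nat.mul_le_mul_left _ h2
      rw [Nat.mul_add] at h3
      generalize (b + 1) * s = p at *
      generalize (b + 1) * t = q at *
      omega
    · obtain rfl : s = t + 1 := by omega
      rw [Nat.mul_add] at hi'
      generalize (b + 1) * t = p at *
      omega

/-- an ordering `π` is a `b`-ordering iff for every edge `uv`:
(1) `|segment(π u) − segment(π v)| ≤ 1`, and (2) if `segment(π u) + 1 = segment(π v)`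
then `(color(π u), segment(π u))` is lexicographically greater than
`(color(π v), segment(π v))`, i.e. `π u` comes later in the color order. -/
theorem stmt3 {V : Type*} [Fintype V] (G : SimpleGraph V) (b n : ℕ)
    (hb : 1 ≤ b) (hn : 1 ≤ n) (hcard : Fintype.card V = n)
    (π : V → ℕ) (hbij : Set.BijOn π Set.univ (Set.Icc 1 n)) :
    (∀ u v, G.Adj u v → |(π u : ℤ) - (π v : ℤ)| ≤ b) ↔
      (∀ u v, G.Adj u v →
        |(segm b (π u) : ℤ) - (segm b (π v) : ℤ)| ≤ 1 ∧
        (segm b (π u) + 1 = segm b (π v) →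
          (color b (π u) > color b (π v) ∨
            (color b (π u) = color b (π v) ∧ segm b (π u) > segm b (π v))))) := by
  have hpos : ∀ v, 1 ≤ π v := fun v => (hbij.mapsTo (Set.mem_univ v)).1
  constructor
  · intro h u v huv
    obtain ⟨h1, h2, -⟩ := (abs_sub_le_iff_segm_color b _ _ (hpos u) (hpos v)).1 (h u v huv)
    exact ⟨h1, fun e => Or.inl (h2 e)⟩
  · intro h u v huv
    obtain ⟨h1, h2⟩ := h u v huv
    obtain ⟨-, h3⟩ := h v u huv.symm
    refine (abs_sub_le_iff_segm_color b _ _ (hpos u) (hpos v)).2 ⟨h1, fun e => ?_, fun e => ?_⟩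
    · have := h2 e
      omega
    · have := h3 e
      omega
end

section
/- Let p and q be positions in {1,…,n} with segment(p) + 1 = segment(q). Then p < q, and q − p ≤ b if and only if color(p) > color(q). -/
/-- if `p, q ∈ {1,…,n}` and `segment(p) + 1 = segment(q)`, then `p < q`,
and `q − p ≤ b` iff `color(p) > color(q)`. -/
theorem stmt4 (b n : ℕ) (hb : 1 ≤ b) (hn : 1 ≤ n)
    (p q : ℕ) (hp1 : 1 ≤ p) (hpn : p ≤ n) (hq1 : 1 ≤ q) (hqn : q ≤ n)
    (hseg : segm b p + 1 = segm b q) :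
    p < q ∧ (q - p ≤ b ↔ color b p > color b q) := by
  obtain ⟨x, rfl⟩ : ∃ x, p = x + 1 := ⟨p - 1, by omega⟩
  obtain ⟨y, rfl⟩ : ∃ y, q = y + 1 := ⟨q - 1, by omega⟩
  have segm_succ (z : ℕ) : segm b (z + 1) = z / (b + 1) + 1 := by
    rw [segm, show z + 1 + b = z + (b + 1) by omega, Nat.add_div_right _ (Nat.succ_pos b)]
  rw [segm_succ, segm_succ] at hseg
  simp only [color, Nat.add_sub_cancel]
  have hx := Nat.div_add_mod x (b + 1)
  have hy := Nat.div_add_mod y (b + 1)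
  have hxlt : x % (b + 1) < b + 1 := Nat.mod_lt x (Nat.succ_pos b)
  rw [show y / (b + 1) = x / (b + 1) + 1 by omega, Nat.mul_add, Nat.mul_one] at hy
  omega
end

section
/- Let π be a b-ordering of G consistent with a segment assignment φ (relative to a rooted spanning tree D of G). For each 0 ≤ k ≤ n, let s_k be the partial function defined exactly on the set of vertices occupying the first k positions in the color order, with s_k(v) = Θ_{segment(π(v))}. Then every s_k is a state, and for every 0 ≤ k < n the state s_{k+1} is an extension of s_k. -/
/-- `q` strictly precedes `p` in the color order (lexicographic by (color, segment)). -/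
def ColorLt (b q p : ℕ) : Prop :=
  color b q < color b p ∨ (color b q = color b p ∧ segm b q < segm b p)

instance (b q p : ℕ) : Decidable (ColorLt b q p) := by
  unfold ColorLt; infer_instance

/-- The number of positions in `{1,…,n}` strictly preceding `p` in the color order;
the first `k` positions in the color order are those of rank `< k`. -/
def rank (b n p : ℕ) : ℕ := ((Finset.Icc 1 n).filter (fun q => ColorLt b q p)).card

open Classical in
/-- The segment assigned by the segment assignment with start indices `φ`:
a leaf `v` gets `Θ_{(φ v, φ v + 4)}`, an inner vertex gets `Θ_{(φ v, φ v + 2)}`. -/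
noncomputable def SegOf {V : Type*} (b n : ℕ) (pa : V → V) (φ : V → ℤ) (v : V) : Set ℕ :=
  if IsLeaf pa v then Seg b n (φ v) (φ v + 4) else Seg b n (φ v) (φ v + 2)

/-- A state for the segment assignment with start indices `φ` (relative to the tree
with parent map `pa`): a partial map `s` from vertices to base-segment indices such that
(0) each assigned base segment `Θ_i` is contained in `φ v`;
(1) the vertices of `dom s` can be assigned to the first `|dom s|` positions in the
    color order compatibly with `s`;
(2) for every edge `uv`: if `s v = Θ_i` is defined and `s u` is undefined with
    `φ u = Θ_{(k,l)}` then `k ≤ i`, and if both `s u = Θ_k`, `s v = Θ_i` are defined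
    then `|i − k| ≤ 1`. -/
def IsState {V : Type*} [Fintype V] (G : SimpleGraph V) (b n : ℕ) (pa : V → V)
    (φ : V → ℤ) (s : V → Option ℤ) : Prop :=
  (∀ v i, s v = some i → Seg b n i (i + 1) ⊆ SegOf b n pa φ v) ∧
  (∃ g : V → ℕ, Set.BijOn g {v | (s v).isSome}
      {q : ℕ | 1 ≤ q ∧ q ≤ n ∧ rank b n q < {v | (s v).isSome}.ncard} ∧
      ∀ v i, s v = some i → g v ∈ Seg b n i (i + 1)) ∧
  (∀ u v i, G.Adj u v → s v = some i → s u = none → φ u ≤ i) ∧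
  (∀ u v i k, G.Adj u v → s u = some k → s v = some i → |i - k| ≤ 1)

/-- `s'` extends `s` by defining one new vertex `v`; for every edge `uv`
with `s' u = Θ_k` defined and `s' v = Θ_i`, one has `k − 1 ≤ i ≤ k`. -/
def IsExtension {V : Type*} (G : SimpleGraph V) (s s' : V → Option ℤ) : Prop :=
  ∃ v, s v = none ∧ (s' v).isSome ∧ (∀ w, w ≠ v → s' w = s w) ∧
    ∀ u k i, G.Adj u v → s' u = some k → s' v = some i → k - 1 ≤ i ∧ i ≤ k

/-- Decomposition of a position into segment and color, with the range of the color. -/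
lemma position_decomp (b p : ℕ) (hp : 1 ≤ p) :
    (p : ℤ) = ((segm b p : ℤ) - 1) * (b + 1) + color b p ∧
      1 ≤ color b p ∧ color b p ≤ b + 1 := by
  obtain ⟨q, rfl⟩ : ∃ q, p = q + 1 := ⟨p - 1, by omega⟩
  have hseg : segm b (q + 1) = q / (b + 1) + 1 := by
    unfold segm
    rw [show q + 1 + b = q + (b + 1) by ring, Nat.add_div_right _ (by omega)]
  have hcol : color b (q + 1) = q % (b + 1) + 1 := by simp [color]
  have hmod := Nat.mod_lt q (show 0 < b + 1 by omega)
  have hdiv : ((b : ℤ) + 1) * (q / (b + 1) : ℕ) + (q % (b + 1) : ℕ) = q := by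
    exact_mod_cast Nat.div_add_mod q (b + 1)
  rw [hseg, hcol]
  refine ⟨?_, by omega, by omega⟩
  push_cast at hdiv ⊢
  linarith

lemma mem_baseSeg {b n p : ℕ} (h1 : 1 ≤ p) (h2 : p ≤ n) :
    p ∈ Seg b n ((segm b p : ℤ) - 1) ((segm b p : ℤ) - 1 + 1) := by
  obtain ⟨h, hc1, hc2⟩ := position_decomp b p h1
  refine ⟨?_, ?_, h1, h2⟩
  · have : (1 : ℤ) ≤ color b p := by exact_mod_cast hc1
    linarith
  · have : (color b p : ℤ) ≤ b + 1 := by exact_mod_cast hc2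
    linarith

lemma segm_bounds_of_mem_Seg {b n p : ℕ} {i j : ℤ} (h : p ∈ Seg b n i j) :
    i ≤ (segm b p : ℤ) - 1 ∧ (segm b p : ℤ) - 1 + 1 ≤ j := by
  obtain ⟨hi, hj, h1, h2⟩ := h
  obtain ⟨g1, g2, -, -⟩ := mem_baseSeg (b := b) h1 h2
  have hb : (0 : ℤ) < b + 1 := by positivity
  have e1 := lt_of_mul_lt_mul_right (lt_of_lt_of_le hi g2) hb.le
  have e2 := lt_of_mul_lt_mul_right (lt_of_lt_of_le g1 hj) hb.le
  omega

lemma Seg_subset_Seg {b n : ℕ} {i j k l : ℤ} (hi : k ≤ i) (hj : j ≤ l) :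
    Seg b n i j ⊆ Seg b n k l := by
  rintro p ⟨h1, h2, h3, h4⟩
  have hb : (0 : ℤ) ≤ b + 1 := by positivity
  exact ⟨lt_of_le_of_lt (mul_le_mul_of_nonneg_right hi hb) h1,
    h2.trans (mul_le_mul_of_nonneg_right hj hb), h3, h4⟩

lemma segm_le_succ {b p q : ℕ} (hp : 1 ≤ p) (hq : 1 ≤ q) (h : |(p : ℤ) - q| ≤ b) :
    segm b p ≤ segm b q + 1 := by
  obtain ⟨ep, hp1, hp2⟩ := position_decomp b p hp
  obtain ⟨eq, hq1, hq2⟩ := position_decomp b q hq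
  by_contra! hlt
  have hlt' : (segm b q : ℤ) + 2 ≤ segm b p := by exact_mod_cast hlt
  have hb : (0 : ℤ) ≤ b + 1 := by positivity
  have hmul := mul_le_mul_of_nonneg_right hlt' hb
  have hd := (abs_le.mp h).2
  zify at hp1 hq2
  linarith

/-- Among positions at distance at most `b`, the one earlier in the color order does not lie in
an earlier segment. -/
lemma segm_le_of_colorLt {b p q : ℕ} (hp : 1 ≤ p) (hq : 1 ≤ q) (h : |(p : ℤ) - q| ≤ b)
    (hlt : ColorLt b q p) : segm b p ≤ segm b q := by
  obtain ⟨ep, hp1, hp2⟩ := position_decomp b p hp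
  obtain ⟨eq, hq1, hq2⟩ := position_decomp b q hq
  by_contra! hs
  have hcol : color b q ≤ color b p := by
    rcases hlt with hlt | hlt <;> omega
  have hs' : (segm b q : ℤ) + 1 ≤ segm b p := by exact_mod_cast hs
  have hb : (0 : ℤ) ≤ b + 1 := by positivity
  have hmul := mul_le_mul_of_nonneg_right hs' hb
  have hd := (abs_le.mp h).2
  zify at hcol
  linarith

lemma colorLt_or_colorLt {b p q : ℕ} (hp : 1 ≤ p) (hq : 1 ≤ q) (hne : p ≠ q) :
    ColorLt b p q ∨ ColorLt b q p := by
  have ep := (position_decomp b p hp).1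
  have eq := (position_decomp b q hq).1
  by_contra! hno
  obtain ⟨h1, h2⟩ := hno
  unfold ColorLt at h1 h2
  have hc : color b p = color b q := by omega
  have hs : segm b p = segm b q := by omega
  rw [hc, hs, ← eq] at ep
  exact hne (by exact_mod_cast ep)

lemma rank_lt_rank {b n p q : ℕ} (hp1 : 1 ≤ p) (hp2 : p ≤ n) (h : ColorLt b p q) :
    rank b n p < rank b n q := by
  apply Finset.card_lt_card
  rw [Finset.ssubset_iff_of_subset]
  · refine ⟨p, by simp [hp1, hp2, h], ?_⟩
    rw [Finset.mem_filter]
    rintro ⟨-, hlt⟩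
    unfold ColorLt at hlt
    omega
  · intro x hx
    simp only [Finset.mem_filter] at hx ⊢
    refine ⟨hx.1, ?_⟩
    have hx2 := hx.2
    unfold ColorLt at *
    omega

lemma rank_lt {b n p : ℕ} (hp1 : 1 ≤ p) (hp2 : p ≤ n) : rank b n p < n := by
  have hss : (Finset.Icc 1 n).filter (fun q => ColorLt b q p) ⊂ Finset.Icc 1 n := by
    rw [Finset.filter_ssubset]
    exact ⟨p, by simp [hp1, hp2], by simp [ColorLt]⟩
  have := Finset.card_lt_card hss
  simpa [rank] using this

lemma rank_bijOn (b n : ℕ) : Set.BijOn (rank b n) (Set.Icc 1 n) (Set.Iio n) := by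
  have hmaps : Set.MapsTo (rank b n) (Finset.Icc 1 n : Finset ℕ) (Finset.range n) := by
    intro p hp
    simp only [Finset.coe_Icc, Set.mem_Icc] at hp
    simpa using rank_lt hp.1 hp.2
  have hinj : Set.InjOn (rank b n) (Finset.Icc 1 n : Finset ℕ) := by
    intro p hp q hq h
    simp only [Finset.coe_Icc, Set.mem_Icc] at hp hq
    by_contra hne
    rcases colorLt_or_colorLt (b := b) hp.1 hq.1 hne with hlt | hlt
    · exact (rank_lt_rank hp.1 hp.2 hlt).ne h
    · exact (rank_lt_rank hq.1 hq.2 hlt).ne' h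
  have hsurj := Finset.surjOn_of_injOn_of_card_le _ hmaps hinj (by simp)
  rw [Finset.coe_Icc, Finset.coe_range] at hmaps hsurj
  rw [Finset.coe_Icc] at hinj
  exact ⟨hmaps, hinj, hsurj⟩

lemma colorLt_of_rank_lt {b n p q : ℕ} (hp : 1 ≤ p) (hq1 : 1 ≤ q) (hq2 : q ≤ n)
    (h : rank b n p < rank b n q) : ColorLt b p q := by
  have hne : p ≠ q := by rintro rfl; exact lt_irrefl _ h
  rcases colorLt_or_colorLt (b := b) hp hq1 hne with hlt | hlt
  · exact hlt
  · exact absurd (rank_lt_rank hq1 hq2 hlt) (by omega)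

/-- The start of the assigned segment of `v` bounds from below the base segment of any of its
positions, and that base segment is contained in the assigned one. -/
lemma baseSeg_of_mem_SegOf {V : Type*} {b n : ℕ} {pa : V → V} {φ : V → ℤ} {v : V} {p : ℕ}
    (h : p ∈ SegOf b n pa φ v) :
    φ v ≤ (segm b p : ℤ) - 1 ∧
      Seg b n ((segm b p : ℤ) - 1) ((segm b p : ℤ) - 1 + 1) ⊆ SegOf b n pa φ v := by
  unfold SegOf at h ⊢
  split_ifs at h ⊢
  all_goals
    obtain ⟨h1, h2⟩ := segm_bounds_of_mem_Seg h
    exact ⟨h1, Seg_subset_Seg h1 h2⟩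

/-- for a `b`-ordering `π` consistent with a segment assignment `φ`,
the partial maps `s k` (defined exactly on the vertices occupying the first `k`
positions in the color order, assigning to each the base segment of `π v`, i.e. the
base segment `Θ_{segm (π v) − 1}` containing `π v`) are all states, and each `s (k+1)`
is an extension of `s k`. -/
theorem stmt8 {V : Type*} [Fintype V] (G : SimpleGraph V) (b n : ℕ)
    (hb : 1 ≤ b) (hn : 2 ≤ n) (hcard : Fintype.card V = n)
    (u0 : V) (pa : V → V) (htree : IsRootedSpanningTree G u0 pa)
    (φ : V → ℤ)
    (hφinner : ∀ v, v ≠ u0 → ¬ IsLeaf pa v → |φ v - φ (pa v)| = 1)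
    (hφleaf : ∀ v, IsLeaf pa v → φ v = φ (pa v) - 1)
    (π : V → ℕ) (hbij : Set.BijOn π Set.univ (Set.Icc 1 n))
    (hband : ∀ u v, G.Adj u v → |(π u : ℤ) - (π v : ℤ)| ≤ b)
    (hcons : ∀ v, π v ∈ SegOf b n pa φ v)
    (s : ℕ → V → Option ℤ)
    (hs : ∀ k v, s k v =
      if rank b n (π v) < k then some ((segm b (π v) : ℤ) - 1) else none) :
    (∀ k, k ≤ n → IsState G b n pa φ (s k)) ∧
      (∀ k, k < n → IsExtension G (s k) (s (k + 1))) := by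
  have hmem : ∀ v, 1 ≤ π v ∧ π v ≤ n := fun v => hbij.mapsTo (Set.mem_univ v)
  have hrank : Set.BijOn (fun v => rank b n (π v)) Set.univ (Set.Iio n) :=
    (rank_bijOn b n).comp hbij
  have hsome : ∀ {k v i}, s k v = some i →
      rank b n (π v) < k ∧ i = (segm b (π v) : ℤ) - 1 := by
    intro k v i h
    rw [hs] at h
    split_ifs at h with hk
    exact ⟨hk, (Option.some.inj h).symm⟩
  have hnone : ∀ {k v}, s k v = none → k ≤ rank b n (π v) := by
    intro k v h
    rw [hs] at h
    split_ifs at h with hk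
    omega
  have hdom : ∀ k, {v | (s k v).isSome} = {v | rank b n (π v) < k} := by
    intro k
    ext v
    simp only [Set.mem_ofPred_eq, hs]
    split_ifs with hk <;> simp [hk]
  constructor
  · intro k hk
    refine ⟨?_, ⟨π, ?_, ?_⟩, ?_, ?_⟩
    · intro v i h
      obtain ⟨-, rfl⟩ := hsome h
      exact (baseSeg_of_mem_SegOf (hcons v)).2
    · have hncard : {v | rank b n (π v) < k}.ncard = k := by
        rw [← (hrank.injOn.mono (Set.subset_univ _)).ncard_image]
        have himage : (fun v => rank b n (π v)) '' {v | rank b n (π v) < k} = Set.Iio k := by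
          ext r
          constructor
          · rintro ⟨v, hv, rfl⟩
            exact hv
          · intro hr
            obtain ⟨v, -, rfl⟩ := hrank.surjOn (show r ∈ Set.Iio n from lt_of_lt_of_le hr hk)
            exact ⟨v, hr, rfl⟩
        rw [himage, Set.ncard_eq_toFinset_card']
        simp
      rw [hdom, hncard]
      refine ⟨fun v hv => ⟨(hmem v).1, (hmem v).2, hv⟩,
        hbij.injOn.mono (Set.subset_univ _), ?_⟩
      rintro q ⟨hq1, hq2, hq⟩
      obtain ⟨v, -, rfl⟩ := hbij.surjOn (show q ∈ Set.Icc 1 n from ⟨hq1, hq2⟩)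
      exact ⟨v, hq, rfl⟩
    · intro v i h
      obtain ⟨-, rfl⟩ := hsome h
      exact mem_baseSeg (hmem v).1 (hmem v).2
    · intro u v i huv hv hu
      obtain ⟨hvk, rfl⟩ := hsome hv
      -- `v` precedes `u` in the color order, so it lies in the same or a later segment.
      have hlt : ColorLt b (π v) (π u) :=
        colorLt_of_rank_lt (hmem v).1 (hmem u).1 (hmem u).2 (lt_of_lt_of_le hvk (hnone hu))
      have hle := segm_le_of_colorLt (hmem u).1 (hmem v).1 (hband u v huv) hlt
      have hφ := (baseSeg_of_mem_SegOf (hcons u)).1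
      omega
    · intro u v i k' huv hu hv
      obtain ⟨-, rfl⟩ := hsome hu
      obtain ⟨-, rfl⟩ := hsome hv
      have h1 := segm_le_succ (hmem u).1 (hmem v).1 (hband u v huv)
      have h2 := segm_le_succ (hmem v).1 (hmem u).1 (hband v u huv.symm)
      rw [abs_le]
      omega
  · intro k hk
    -- The new vertex is the one at the position of rank `k`.
    obtain ⟨v, -, hv⟩ := hrank.surjOn (show k ∈ Set.Iio n from hk)
    simp only at hv
    have hinj : ∀ w, rank b n (π w) = k → w = v := fun w hw =>
      hrank.injOn (Set.mem_univ w) (Set.mem_univ v) (hw.trans hv.symm)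
    refine ⟨v, by simp [hs, hv], by simp [hs, hv], ?_, ?_⟩
    · intro w hw
      have hne : rank b n (π w) ≠ k := fun h => hw (hinj w h)
      have hiff : rank b n (π w) < k + 1 ↔ rank b n (π w) < k := by omega
      simp only [hs, hiff]
    · intro u k' i huv hu hv'
      obtain ⟨huk, rfl⟩ := hsome hu
      obtain ⟨-, rfl⟩ := hsome hv'
      have hne : rank b n (π u) ≠ k := fun h => huv.ne (hinj u h)
      have hlt : ColorLt b (π u) (π v) :=
        colorLt_of_rank_lt (hmem u).1 (hmem v).1 (hmem v).2 (by omega)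
      have h1 := segm_le_of_colorLt (hmem v).1 (hmem u).1 (hband v u huv.symm) hlt
      have h2 := segm_le_succ (hmem u).1 (hmem v).1 (hband u v huv)
      omega
end

section
/- Let D be a rooted spanning tree of G with root u0 and parent map p, in which every leaf is distinct from u0, let L be the number of leaves of D, and let f : V → ℤ be any function (recording, for each vertex v, the index of the start of its assigned segment). Then the number of functions s : V → Option ℤ satisfying the following constraints is at most 3^{n−L} · 4^{L}: (i) for every inner vertex v, s(v) ∈ {none, some f(v), some (f(v)+1)}; (ii) for every leaf v with parent u, s(v) ∈ {none, some f(v), some (f(v)+1), some (f(v)+2), some (f(v)+3)}, and moreover: if s(u) = none then s(v) ≠ some f(v); if s(u) = some f(u) then s(v) ≠ some (f(v)+3); and if s(u) = some (f(u)+1) then s(v) ≠ some f(v). -/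
/-- The function `s` with the value `some (f v + 3)` replaced by `some (f v)` at every leaf `v`. -/
noncomputable def leafCode {V : Type*} (pa : V → V) (f : V → ℤ) (s : V → Option ℤ) :
    V → Option ℤ :=
  open Classical in fun v => if IsLeaf pa v ∧ s v = some (f v + 3) then some (f v) else s v

/-- The possible values of `leafCode pa f s v` for admissible `s`. -/
noncomputable def codeValues {V : Type*} (pa : V → V) (f : V → ℤ) (v : V) :
    Finset (Option ℤ) :=
  open Classical in
  if IsLeaf pa v then {none, some (f v), some (f v + 1), some (f v + 2)}
  else {none, some (f v), some (f v + 1)}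

lemma card_piFinset_codeValues_le {V : Type*} [Fintype V] [DecidableEq V] (pa : V → V)
    (f : V → ℤ) :
    (Fintype.piFinset (codeValues pa f)).card ≤
      3 ^ (Fintype.card V - {v : V | IsLeaf pa v}.ncard) * 4 ^ {v : V | IsLeaf pa v}.ncard := by
  classical
  have hcard (v : V) : (codeValues pa f v).card ≤ if IsLeaf pa v then 4 else 3 := by
    unfold codeValues
    split_ifs
    · exact Finset.card_le_four
    · exact Finset.card_le_three
  have hleaf : {v : V | IsLeaf pa v}.ncard = (Finset.univ.filter (IsLeaf pa)).card := by
    rw [← Set.ncard_coe_finset]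
    simp
  have hinner : (Finset.univ.filter fun v => ¬ IsLeaf pa v).card =
      Fintype.card V - {v : V | IsLeaf pa v}.ncard := by
    have h := Finset.card_filter_add_card_filter_not (s := (Finset.univ : Finset V)) (IsLeaf pa)
    rw [Finset.card_univ] at h
    omega
  rw [Fintype.card_piFinset]
  refine (Finset.prod_le_prod' fun v _ => hcard v).trans ?_
  rw [Finset.prod_ite, Finset.prod_const, Finset.prod_const, hinner, ← hleaf, mul_comm]

/-- counting partial base-segment assignments. For a rooted spanning
tree whose leaves all differ from the root, with `L` leaves, and any function
`f : V → ℤ` recording segment start indices, the number of functions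
`s : V → Option ℤ` satisfying the listed constraints is at most `3^{n−L}·4^{L}`. -/
theorem stmt10 {V : Type*} [Fintype V] (G : SimpleGraph V) (n : ℕ)
    (hn : 2 ≤ n) (hcard : Fintype.card V = n)
    (u0 : V) (pa : V → V) (htree : IsRootedSpanningTree G u0 pa)
    (hleaf_root : ∀ v, IsLeaf pa v → v ≠ u0)
    (L : ℕ) (hL : L = {v : V | IsLeaf pa v}.ncard)
    (f : V → ℤ) :
    {s : V → Option ℤ |
        (∀ v, ¬ IsLeaf pa v →
          s v = none ∨ s v = some (f v) ∨ s v = some (f v + 1)) ∧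
        (∀ v, IsLeaf pa v →
          (s v = none ∨ s v = some (f v) ∨ s v = some (f v + 1) ∨
            s v = some (f v + 2) ∨ s v = some (f v + 3)) ∧
          (s (pa v) = none → s v ≠ some (f v)) ∧
          (s (pa v) = some (f (pa v)) → s v ≠ some (f v + 3)) ∧
          (s (pa v) = some (f (pa v) + 1) → s v ≠ some (f v)))}.encard
      ≤ ((3 ^ (n - L) * 4 ^ L : ℕ) : ℕ∞) := by
  classical
  subst hcard hL
  have hpa (v : V) (hv : IsLeaf pa v) : ¬ IsLeaf pa (pa v) := fun h =>
    (htree.2.1 v (hleaf_root v hv)).ne (h v rfl)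
  refine le_trans ?_ (Nat.cast_le.2 (card_piFinset_codeValues_le pa f))
  rw [← Set.encard_coe_eq_coe_finsetCard]
  refine Set.encard_le_encard_of_injOn (f := leafCode pa f) ?_ ?_
  · rintro s ⟨hi, hl⟩
    simp only [Finset.mem_coe, Fintype.mem_piFinset]
    intro v
    by_cases hv : IsLeaf pa v
    · rcases (hl v hv).1 with h | h | h | h | h <;> simp [leafCode, codeValues, hv, h]
    · rcases hi v hv with h | h | h <;> simp [leafCode, codeValues, hv, h]
  · rintro s ⟨hsi, hsl⟩ t ⟨hti, htl⟩ hst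
    have hinner (v : V) (hv : ¬ IsLeaf pa v) : s v = t v := by
      simpa [leafCode, hv] using congrFun hst v
    funext v
    by_cases hv : IsLeaf pa v
    · have hcode := congrFun hst v
      have hpar := hinner (pa v) (hpa v hv)
      obtain ⟨hs, hs0, hs1, hs2⟩ := hsl v hv
      obtain ⟨ht, ht0, ht1, ht2⟩ := htl v hv
      rw [hpar] at hs0 hs1 hs2
      simp only [leafCode, hv, true_and] at hcode
      -- The common value at the parent forbids either `f v` or `f v + 3` for both functions.
      have hforbid : (s v ≠ some (f v) ∧ t v ≠ some (f v)) ∨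
          (s v ≠ some (f v + 3) ∧ t v ≠ some (f v + 3)) := by
        rcases hti (pa v) (hpa v hv) with h | h | h
        · exact Or.inl ⟨hs0 h, ht0 h⟩
        · exact Or.inr ⟨hs1 h, ht1 h⟩
        · exact Or.inl ⟨hs2 h, ht2 h⟩
      split_ifs at hcode with h1 h2 h2
      · rw [h1, h2]
      · rcases hforbid with h | h
        · exact absurd hcode.symm h.2
        · exact absurd h1 h.1
      · rcases hforbid with h | h
        · exact absurd hcode h.1
        · exact absurd h2 h.2
      · exact hcode
    · exact hinner v hv
end
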